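/- Let α ∈ (0,1), let 0 < t₂ < t₁ be reals, and let N be a positive integer. For P > 0 define g(P) = N·log₂( ((t₂ + P)·(t₁ + (1−α)·P)) / ((t₂ + (1−α)·P)·(t₁ + P)) ), and set P* = √(t₁·t₂/(1−α)). Then g is strictly increasing on the interval (0, P*) and strictly decreasing on the interval (P*, ∞); moreover g(P) → 0 as P → ∞. -/

import Mathlib

open Filter

/-!
Put `β = 1 - α`. The logarithm's argument is unchanged by the inversion `P ↦ t₁ t₂ / (β P)`, whose
positive fixed point is `P*`. Cross-multiplying, it is larger at `y` than at `x < y` exactly when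
`β x y < t₁ t₂`, so it increases on `[0, P*]`; the inversion carries this to decrease on `[P*, ∞)`,
and the limit at infinity to the value `1` at `P = 0`.
-/

open Set Topology

section LossRatio

variable {𝕜 : Type*} [Field 𝕜]

/-- The ratio whose logarithm is the rate lost per user when the antenna subset `T₂` is replaced by
`T₁`. Under zero-forcing with total power `P`, the subset `Tᵢ` gives every user
`1 + SINR = (tᵢ + P) / (tᵢ + β P)`, where `β = 1 - α` is the distortion factor belonging to the
quantization gain `α`; this is the value for `T₂` divided by the one for `T₁`. -/
def lossRatio (β t₁ t₂ P : 𝕜) : 𝕜 :=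
  ((t₂ + P) * (t₁ + β * P)) / ((t₂ + β * P) * (t₁ + P))

theorem lossRatio_zero {t₁ t₂ : 𝕜} (β : 𝕜) (ht₁ : t₁ ≠ 0) (ht₂ : t₂ ≠ 0) :
    lossRatio β t₁ t₂ 0 = 1 := by
  simp [lossRatio, mul_comm t₂ t₁, ht₁, ht₂]

theorem lossRatio_inversion {β t₁ t₂ P : 𝕜} (hβ : β ≠ 0) (ht₁ : t₁ ≠ 0) (ht₂ : t₂ ≠ 0)
    (hP : P ≠ 0) : lossRatio β t₁ t₂ (t₁ * t₂ / (β * P)) = lossRatio β t₁ t₂ P := by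
  have numerator : (t₂ + t₁ * t₂ / (β * P)) * (t₁ + β * (t₁ * t₂ / (β * P))) =
      t₁ * t₂ / (β * P ^ 2) * ((t₂ + P) * (t₁ + β * P)) := by
    field_simp
    ring
  have denominator : (t₂ + β * (t₁ * t₂ / (β * P))) * (t₁ + t₁ * t₂ / (β * P)) =
      t₁ * t₂ / (β * P ^ 2) * ((t₂ + β * P) * (t₁ + P)) := by
    field_simp
    ring
  have factor_ne_zero : t₁ * t₂ / (β * P ^ 2) ≠ 0 := by simp [hβ, ht₁, ht₂, hP]
  rw [lossRatio, numerator, denominator, mul_div_mul_left _ _ factor_ne_zero, lossRatio]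

variable [LinearOrder 𝕜] [IsStrictOrderedRing 𝕜] {β t₁ t₂ p x y : 𝕜}

theorem lossRatio_pos (hβ : 0 ≤ β) (ht₁ : 0 < t₁) (ht₂ : 0 < t₂) (hx : 0 ≤ x) :
    0 < lossRatio β t₁ t₂ x := by
  unfold lossRatio
  positivity

theorem lossRatio_lt_lossRatio_iff (hβ₀ : 0 ≤ β) (hβ₁ : β < 1) (ht₂ : 0 < t₂) (ht : t₂ < t₁)
    (hx : 0 ≤ x) (hxy : x < y) :
    lossRatio β t₁ t₂ x < lossRatio β t₁ t₂ y ↔ β * (x * y) < t₁ * t₂ := by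
  have ht₁ : 0 < t₁ := ht₂.trans ht
  have hy : 0 < y := hx.trans_lt hxy
  have cross_sub : (t₂ + y) * (t₁ + β * y) * ((t₂ + β * x) * (t₁ + x)) -
      (t₂ + x) * (t₁ + β * x) * ((t₂ + β * y) * (t₁ + y)) =
      (1 - β) * (t₁ - t₂) * (y - x) * (t₁ * t₂ - β * (x * y)) := by
    ring
  have factor_pos : 0 < (1 - β) * (t₁ - t₂) * (y - x) :=
    mul_pos (mul_pos (sub_pos.2 hβ₁) (sub_pos.2 ht)) (sub_pos.2 hxy)
  rw [lossRatio, lossRatio, div_lt_div_iff₀ (by positivity) (by positivity), ← sub_pos, cross_sub,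
    mul_pos_iff_of_pos_left factor_pos, sub_pos]

theorem strictMonoOn_lossRatio (hβ₀ : 0 ≤ β) (hβ₁ : β < 1) (ht₂ : 0 < t₂) (ht : t₂ < t₁)
    (hp : β * p ^ 2 ≤ t₁ * t₂) : StrictMonoOn (lossRatio β t₁ t₂) (Icc 0 p) := by
  intro x hx y hy hxy
  rw [lossRatio_lt_lossRatio_iff hβ₀ hβ₁ ht₂ ht hx.1 hxy]
  have ht₁t₂ : 0 < t₁ * t₂ := mul_pos (ht₂.trans ht) ht₂
  have hxy_lt : x * y < p ^ 2 := by
    have hy₀ : 0 < y := hx.1.trans_lt hxy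
    calc x * y < y * y := mul_lt_mul_of_pos_right hxy hy₀
      _ ≤ p ^ 2 := by rw [← sq]; gcongr; exact hy.2
  rcases hβ₀.eq_or_lt with rfl | hβ
  · simpa using ht₁t₂
  · exact (mul_lt_mul_of_pos_left hxy_lt hβ).trans_le hp

theorem strictAntiOn_lossRatio (hβ₀ : 0 < β) (hβ₁ : β < 1) (ht₂ : 0 < t₂) (ht : t₂ < t₁)
    (hp₀ : 0 < p) (hp : t₁ * t₂ ≤ β * p ^ 2) :
    StrictAntiOn (lossRatio β t₁ t₂) (Ici p) := by
  have ht₁ : 0 < t₁ := ht₂.trans ht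
  have inversion_anti : StrictAntiOn (fun P ↦ t₁ * t₂ / (β * P)) (Ici p) := by
    intro x hx y _ hxy
    have hx₀ : 0 < x := hp₀.trans_le hx
    dsimp only
    gcongr
  have inversion_mapsTo :
      MapsTo (fun P ↦ t₁ * t₂ / (β * P)) (Ici p) (Icc 0 (t₁ * t₂ / (β * p))) := by
    intro x hx
    have hx₀ : 0 < x := hp₀.trans_le hx
    exact ⟨by positivity, inversion_anti.antitoneOn self_mem_Ici hx hx⟩
  have inversion_endpoint : β * (t₁ * t₂ / (β * p)) ^ 2 ≤ t₁ * t₂ :=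
    calc β * (t₁ * t₂ / (β * p)) ^ 2 = t₁ * t₂ * (t₁ * t₂ / (β * p ^ 2)) := by field_simp
      _ ≤ t₁ * t₂ := mul_le_of_le_one_right (by positivity) (div_le_one_of_le₀ hp (by positivity))
  refine ((strictMonoOn_lossRatio hβ₀.le hβ₁ ht₂ ht inversion_endpoint).comp_strictAntiOn
    inversion_anti inversion_mapsTo).congr fun x hx ↦ ?_
  exact lossRatio_inversion hβ₀.ne' ht₁.ne' ht₂.ne' (hp₀.trans_le hx).ne'

theorem tendsto_lossRatio_atTop [TopologicalSpace 𝕜] [OrderTopology 𝕜] (hβ : 0 < β) (ht₁ : t₁ ≠ 0)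
    (ht₂ : t₂ ≠ 0) : Tendsto (lossRatio β t₁ t₂) atTop (𝓝 1) := by
  have continuousAt_zero : ContinuousAt (lossRatio β t₁ t₂) 0 := by
    unfold lossRatio
    exact ContinuousAt.div (by fun_prop) (by fun_prop) (by simp [ht₁, ht₂])
  have inversion_tendsto : Tendsto (fun P ↦ t₁ * t₂ / (β * P)) atTop (𝓝 0) :=
    (tendsto_id.const_mul_atTop hβ).const_div_atTop _
  have comp_tendsto := continuousAt_zero.tendsto.comp inversion_tendsto
  rw [lossRatio_zero β ht₁ ht₂] at comp_tendsto
  refine comp_tendsto.congr' ?_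
  filter_upwards [eventually_gt_atTop 0] with P hP
  exact lossRatio_inversion hβ.ne' ht₁ ht₂ hP.ne'

end LossRatio

theorem strictMonoOn_const_mul_logb {b c : ℝ} (hb : 1 < b) (hc : 0 < c) :
    StrictMonoOn (fun x ↦ c * Real.logb b x) (Ioi 0) :=
  (strictMono_mul_left_of_pos hc).comp_strictMonoOn (Real.strictMonoOn_logb hb)

/-- For `α ∈ (0,1)`, `0 < t₂ < t₁`, and the sum-rate loss
`g P = N log₂(((t₂+P)(t₁+(1-α)P)) / ((t₂+(1-α)P)(t₁+P)))` with `P* = √(t₁ t₂/(1-α))`,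
`g` is strictly increasing on `(0, P*)`, strictly decreasing on `(P*, ∞)`, and `g P → 0` as
`P → ∞`. -/
theorem stmt6 (α t₁ t₂ : ℝ) (hα : α ∈ Set.Ioo (0 : ℝ) 1) (ht₂ : 0 < t₂) (ht : t₂ < t₁)
    (N : ℕ) (hN : 0 < N)
    (g : ℝ → ℝ)
    (hg : ∀ P, g P = (N : ℝ) * Real.logb 2
      (((t₂ + P) * (t₁ + (1 - α) * P)) / ((t₂ + (1 - α) * P) * (t₁ + P))))
    (Pstar : ℝ) (hPstar : Pstar = Real.sqrt (t₁ * t₂ / (1 - α))) :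
    StrictMonoOn g (Set.Ioo 0 Pstar) ∧ StrictAntiOn g (Set.Ioi Pstar) ∧
      Tendsto g atTop (nhds 0) := by
  have ht₁ : 0 < t₁ := ht₂.trans ht
  have hβ₀ : 0 < 1 - α := sub_pos.2 hα.2
  have hβ₁ : 1 - α < 1 := sub_lt_self 1 hα.1
  have hP₀ : 0 < Pstar := hPstar ▸ Real.sqrt_pos.2 (by positivity)
  have hP : (1 - α) * Pstar ^ 2 = t₁ * t₂ := by
    rw [hPstar, Real.sq_sqrt (by positivity), mul_div_cancel₀ _ hβ₀.ne']
  obtain rfl : g = fun P ↦ N * Real.logb 2 (lossRatio (1 - α) t₁ t₂ P) := funext hg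
  have hlog := strictMonoOn_const_mul_logb one_lt_two (Nat.cast_pos.2 hN)
  refine ⟨?_, ?_, ?_⟩
  · exact hlog.comp ((strictMonoOn_lossRatio hβ₀.le hβ₁ ht₂ ht hP.le).mono Ioo_subset_Icc_self)
      fun P hmem ↦ lossRatio_pos hβ₀.le ht₁ ht₂ hmem.1.le
  · exact hlog.comp_strictAntiOn
      ((strictAntiOn_lossRatio hβ₀ hβ₁ ht₂ ht hP₀ hP.ge).mono Ioi_subset_Ici_self)
      fun P hmem ↦ lossRatio_pos hβ₀.le ht₁ ht₂ (hP₀.trans hmem).le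
  · simpa using ((tendsto_lossRatio_atTop hβ₀ ht₁.ne' ht₂.ne').logb one_ne_zero).const_mul (N : ℝ)
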